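/- Let D ≥ 0 and let x, y ∈ ℝ satisfy x + y ≤ -D. Then Φ(x)·Φ(y) ≤ Φ(-D/2)². (The product Φ(x)Φ(y) under the constraint x + y ≤ -D is maximized at x = y = -D/2, by log-concavity of Φ.) -/

import Mathlib

open Real MeasureTheory

/-- The standard Gaussian density. -/
noncomputable def gaussPdf (z : ℝ) : ℝ := (Real.sqrt (2 * Real.pi))⁻¹ * Real.exp (-z ^ 2 / 2)

/-- The standard normal CDF. -/
noncomputable def Phi (r : ℝ) : ℝ := ∫ z in Set.Iic r, gaussPdf z

/-! For a measurable `f ≥ 0`, log-concavity says that `f s * f (t + h) ≤ f (s + h) * f t` whenever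
`s ≤ t` and `0 ≤ h`. In this form it passes from a density `f` to its distribution function `F`:
removing the common term `F s * F (s + h)` from `F s * F (t + h) ≤ F (s + h) * F t` leaves the
inequality for `f` at `u ≤ s < v`, integrated over `u ∈ (-∞, s]` and `v ∈ (s, t]`. Taking
`t = s + h` yields `F x * F y ≤ F ((x + y) / 2) ^ 2`, and `F` is monotone. -/

/-- The Pólya frequency condition of order two (without the requirement `0 ≤ f`): the minors
`f (x₁ - y₁) * f (x₂ - y₂) - f (x₁ - y₂) * f (x₂ - y₁)` with `x₁ ≤ x₂`, `y₁ ≤ y₂` are nonnegative,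
encoded with `s = x₁ - y₂`, `t = x₂ - y₂`, `h = y₂ - y₁`. For measurable `f ≥ 0` it is
log-concavity; unlike the concavity of `log ∘ f`, it makes sense where `f` vanishes. -/
def IsPolyaFrequencyTwo (f : ℝ → ℝ) : Prop :=
  ∀ ⦃s t h : ℝ⦄, s ≤ t → 0 ≤ h → f s * f (t + h) ≤ f (s + h) * f t

theorem IsPolyaFrequencyTwo.mul_le_sq_midpoint {f : ℝ → ℝ} (hf : IsPolyaFrequencyTwo f) (x y : ℝ) :
    f x * f y ≤ f ((x + y) / 2) ^ 2 := by
  wlog hxy : x ≤ y generalizing x y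
  · rw [mul_comm, add_comm x y]
    exact this y x (le_of_not_ge hxy)
  calc f x * f y = f x * f ((x + y) / 2 + (y - x) / 2) := by ring_nf
    _ ≤ f (x + (y - x) / 2) * f ((x + y) / 2) := hf (by linarith) (by linarith)
    _ = f ((x + y) / 2) ^ 2 := by ring_nf

theorem setIntegral_mul_setIntegral_le {α β : Type*} [MeasurableSpace α] [MeasurableSpace β]
    {μ : Measure α} {ν : Measure β} {A : Set α} {B : Set β} {f f' : α → ℝ} {g g' : β → ℝ}
    (hA : MeasurableSet A) (hB : MeasurableSet B)
    (hf : IntegrableOn f A μ) (hf' : IntegrableOn f' A μ)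
    (hg : IntegrableOn g B ν) (hg' : IntegrableOn g' B ν)
    (h : ∀ a ∈ A, ∀ b ∈ B, f a * g b ≤ f' a * g' b) :
    (∫ a in A, f a ∂μ) * ∫ b in B, g b ∂ν ≤ (∫ a in A, f' a ∂μ) * ∫ b in B, g' b ∂ν := by
  have integral_right_le : ∀ a ∈ A, f a * ∫ b in B, g b ∂ν ≤ f' a * ∫ b in B, g' b ∂ν := by
    intro a ha
    rw [← integral_const_mul, ← integral_const_mul]
    exact setIntegral_mono_on (hg.const_mul _) (hg'.const_mul _) hB (h a ha)
  rw [← integral_mul_const, ← integral_mul_const]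
  exact setIntegral_mono_on (hf.mul_const _) (hf'.mul_const _) hA integral_right_le

theorem setIntegral_Iic_comp_add_right {E : Type*} [NormedAddCommGroup E] [NormedSpace ℝ E]
    (f : ℝ → E) (a h : ℝ) : ∫ u in Set.Iic a, f (u + h) = ∫ u in Set.Iic (a + h), f u := by
  simpa using (measurePreserving_add_right volume h).setIntegral_preimage_emb
    (measurableEmbedding_addRight h) f (Set.Iic (a + h))

theorem setIntegral_Iic_add_setIntegral_Ioc {E : Type*} [NormedAddCommGroup E] [NormedSpace ℝ E]
    {μ : Measure ℝ} {f : ℝ → E} (hf : Integrable f μ) {a b : ℝ} (hab : a ≤ b) :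
    (∫ u in Set.Iic a, f u ∂μ) + ∫ u in Set.Ioc a b, f u ∂μ = ∫ u in Set.Iic b, f u ∂μ := by
  rw [← setIntegral_union (Set.Iic_disjoint_Ioc le_rfl) measurableSet_Ioc hf.integrableOn
    hf.integrableOn, Set.Iic_union_Ioc_eq_Iic hab]

theorem IsPolyaFrequencyTwo.setIntegral_Iic {f : ℝ → ℝ} (hf : IsPolyaFrequencyTwo f)
    (hfi : Integrable f) : IsPolyaFrequencyTwo fun r ↦ ∫ z in Set.Iic r, f z := by
  intro s t h hst hh
  have hfi_shift : Integrable fun u ↦ f (u + h) := hfi.comp_add_right h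
  have increment_le : (∫ u in Set.Iic s, f u) * ∫ v in Set.Ioc s t, f (v + h) ≤
      (∫ u in Set.Iic s, f (u + h)) * ∫ v in Set.Ioc s t, f v :=
    setIntegral_mul_setIntegral_le measurableSet_Iic measurableSet_Ioc hfi.integrableOn
      hfi_shift.integrableOn hfi_shift.integrableOn hfi.integrableOn
      fun u hu v hv ↦ hf (le_trans hu hv.1.le) hh
  simp only [← setIntegral_Iic_comp_add_right f _ h]
  rw [← setIntegral_Iic_add_setIntegral_Ioc hfi hst,
    ← setIntegral_Iic_add_setIntegral_Ioc hfi_shift hst]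
  linarith

theorem setIntegral_Iic_mono_of_nonneg {μ : Measure ℝ} {f : ℝ → ℝ} (hf : 0 ≤ f)
    (hfi : Integrable f μ) : Monotone fun r ↦ ∫ z in Set.Iic r, f z ∂μ :=
  fun _ _ hab ↦ setIntegral_mono_set hfi.integrableOn (.of_forall hf)
    (Set.Iic_subset_Iic.2 hab).eventuallyLE

theorem stmt4_general {f : ℝ → ℝ} (hf : IsPolyaFrequencyTwo f) (hf_nonneg : 0 ≤ f)
    (hfi : Integrable f) {D x y : ℝ} (hxy : x + y ≤ -D) :
    (∫ z in Set.Iic x, f z) * (∫ z in Set.Iic y, f z) ≤ (∫ z in Set.Iic (-D / 2), f z) ^ 2 :=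
  calc (∫ z in Set.Iic x, f z) * (∫ z in Set.Iic y, f z)
    _ ≤ (∫ z in Set.Iic ((x + y) / 2), f z) ^ 2 := (hf.setIntegral_Iic hfi).mul_le_sq_midpoint x y
    _ ≤ (∫ z in Set.Iic (-D / 2), f z) ^ 2 := by
      refine pow_le_pow_left₀ (integral_nonneg hf_nonneg) ?_ 2
      exact setIntegral_Iic_mono_of_nonneg hf_nonneg hfi (by linarith)

theorem gaussPdf_eq_gaussianPDFReal : gaussPdf = ProbabilityTheory.gaussianPDFReal 0 1 := by
  ext z
  simp [gaussPdf, ProbabilityTheory.gaussianPDFReal]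

theorem gaussPdf_nonneg : 0 ≤ gaussPdf :=
  gaussPdf_eq_gaussianPDFReal ▸ ProbabilityTheory.gaussianPDFReal_nonneg 0 1

theorem integrable_gaussPdf : Integrable gaussPdf :=
  gaussPdf_eq_gaussianPDFReal ▸ ProbabilityTheory.integrable_gaussianPDFReal 0 1

theorem isPolyaFrequencyTwo_gaussPdf : IsPolyaFrequencyTwo gaussPdf := by
  intro s t h hst hh
  have exponent_le : -s ^ 2 / 2 + -(t + h) ^ 2 / 2 ≤ -(s + h) ^ 2 / 2 + -t ^ 2 / 2 := by
    linarith [mul_le_mul_of_nonneg_right hst hh]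
  simp only [gaussPdf, mul_mul_mul_comm _ (rexp _), ← Real.exp_add]
  gcongr

/-- If `D ≥ 0` and `x + y ≤ -D`, then `Φ(x)·Φ(y) ≤ Φ(-D/2)²`. -/
theorem stmt4 (D x y : ℝ) (hD : 0 ≤ D) (hxy : x + y ≤ -D) :
    Phi x * Phi y ≤ (Phi (-D / 2)) ^ 2 :=
  stmt4_general isPolyaFrequencyTwo_gaussPdf gaussPdf_nonneg integrable_gaussPdf hxy
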